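/- Supercritical (elongated) phase: if μ₁ < log 6 then there exists ε > 0 such that P_{N,μ₁}({m : m ≥ εN}) → 1 as N → ∞ along even integers; i.e. the boundary length is of order N with probability tending to one. -/

import Mathlib

open Filter Real MeasureTheory

/-- Number of rooted quasitriangulations of a sphere with a hole with `N` triangles and
`m` boundary edges (Goulden–Jackson), with `j = (N - m)/2`. -/
noncomputable def C0 (N m : ℕ) : ℝ :=
  (2 : ℝ) ^ ((N - m) / 2 + 2) * (Nat.factorial (2 * m + 3 * ((N - m) / 2) - 1) : ℝ) *
    (Nat.factorial (2 * m - 3) : ℝ) /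
    ((Nat.factorial ((N - m) / 2 + 1) : ℝ) * (Nat.factorial (2 * m + 2 * ((N - m) / 2)) : ℝ) *
      ((Nat.factorial (m - 2) : ℝ)) ^ 2)

/-- The filter "N → ∞ along even integers". -/
def evenAtTop : Filter ℕ := Filter.atTop ⊓ Filter.principal {N | Even N}
/-- Weight of boundary length m: w_{μ₁}(N,m) = exp(-μ₁ m/2) C₀(N,m). -/
noncomputable def w (μ₁ : ℝ) (N m : ℕ) : ℝ := Real.exp (-μ₁ * m / 2) * C0 N m

/-- Normalizing constant Θ_N(μ₁) = Σ_{m even, 2 ≤ m ≤ N} w_{μ₁}(N,m). -/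
noncomputable def Θ (μ₁ : ℝ) (N : ℕ) : ℝ :=
  ∑ m ∈ (Finset.range (N + 1)).filter (fun m => Even m ∧ 2 ≤ m), w μ₁ N m

/-- Boundary-length distribution P_{N,μ₁}(m) = w_{μ₁}(N,m)/Θ_N(μ₁). -/
noncomputable def P (μ₁ : ℝ) (N m : ℕ) : ℝ := w μ₁ N m / Θ μ₁ N

lemma C0_pos (N m : ℕ) : 0 < C0 N m := by
  unfold C0
  positivity

lemma w_pos (μ₁ : ℝ) (N m : ℕ) : 0 < w μ₁ N m := by
  unfold w
  have := C0_pos N m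
  positivity

lemma C0_lo (a i : ℕ) : C0 (a + 2 * i + 4) (a + 2) =
    (2 : ℝ) ^ (i + 3) * ((2 * a + 3 * i + 6).factorial : ℝ) * ((2 * a + 1).factorial : ℝ) /
      (((i + 2).factorial : ℝ) * ((2 * a + 2 * i + 6).factorial : ℝ) * (a.factorial : ℝ) ^ 2) := by
  unfold C0
  have h1 : (a + 2 * i + 4 - (a + 2)) / 2 = i + 1 := by omega
  rw [h1]
  have h2 : 2 * (a + 2) + 3 * (i + 1) - 1 = 2 * a + 3 * i + 6 := by omega
  have h3 : 2 * (a + 2) - 3 = 2 * a + 1 := by omega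
  have h4 : 2 * (a + 2) + 2 * (i + 1) = 2 * a + 2 * i + 6 := by omega
  have h5 : a + 2 - 2 = a := by omega
  rw [h2, h3, h4, h5]

lemma C0_hi (a i : ℕ) : C0 (a + 2 * i + 4) (a + 4) =
    (2 : ℝ) ^ (i + 2) * ((2 * a + 3 * i + 7).factorial : ℝ) * ((2 * a + 5).factorial : ℝ) /
      (((i + 1).factorial : ℝ) * ((2 * a + 2 * i + 8).factorial : ℝ) *
        ((a + 2).factorial : ℝ) ^ 2) := by
  unfold C0
  have h1 : (a + 2 * i + 4 - (a + 4)) / 2 = i := by omega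
  rw [h1]
  have h2 : 2 * (a + 4) + 3 * i - 1 = 2 * a + 3 * i + 7 := by omega
  have h3 : 2 * (a + 4) - 3 = 2 * a + 5 := by omega
  have h4 : 2 * (a + 4) + 2 * i = 2 * a + 2 * i + 8 := by omega
  have h5 : a + 4 - 2 = a + 2 := by omega
  rw [h2, h3, h4, h5]

lemma C0_ratio (a i : ℕ) : C0 (a + 2 * i + 4) (a + 4) =
    (((2 * a + 3 * i + 7 : ℝ) * (2 * a + 5) * (2 * a + 4) * (2 * a + 3) * (2 * a + 2) * (i + 2)) /
     (2 * (2 * a + 2 * i + 7) * (2 * a + 2 * i + 8) * ((a + 2) * (a + 1)) ^ 2)) *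
      C0 (a + 2 * i + 4) (a + 2) := by
  rw [C0_lo, C0_hi]
  rw [show 2 * a + 3 * i + 7 = (2 * a + 3 * i + 6) + 1 from rfl,
    show 2 * a + 5 = (2 * a + 1) + 1 + 1 + 1 + 1 from rfl,
    show i + 2 = (i + 1) + 1 from rfl,
    show 2 * a + 2 * i + 8 = (2 * a + 2 * i + 6) + 1 + 1 from rfl,
    show a + 2 = a + 1 + 1 from rfl]
  rw [Nat.factorial_succ (2 * a + 3 * i + 6), Nat.factorial_succ (2 * a + 1 + 1 + 1 + 1),
    Nat.factorial_succ (2 * a + 1 + 1 + 1), Nat.factorial_succ (2 * a + 1 + 1),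
    Nat.factorial_succ (2 * a + 1), Nat.factorial_succ (i + 1),
    Nat.factorial_succ (2 * a + 2 * i + 6 + 1), Nat.factorial_succ (2 * a + 2 * i + 6),
    Nat.factorial_succ (a + 1), Nat.factorial_succ a]
  have e1 : ((2 * a + 3 * i + 6).factorial : ℝ) ≠ 0 := by positivity
  have e2 : ((2 * a + 1).factorial : ℝ) ≠ 0 := by positivity
  have e3 : ((i + 1).factorial : ℝ) ≠ 0 := by positivity
  have e4 : ((2 * a + 2 * i + 6).factorial : ℝ) ≠ 0 := by positivity
  have e5 : (a.factorial : ℝ) ≠ 0 := by positivity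
  generalize (2 * a + 3 * i + 6).factorial = x1 at *
  generalize (2 * a + 1).factorial = x2 at *
  generalize (i + 1).factorial = x3 at *
  generalize (2 * a + 2 * i + 6).factorial = x4 at *
  generalize a.factorial = x5 at *
  push_cast
  have f1 : (2 * a + 2 * i + 7 : ℝ) ≠ 0 := by positivity
  have f2 : (2 * a + 2 * i + 8 : ℝ) ≠ 0 := by positivity
  have f3 : (a + 1 : ℝ) ≠ 0 := by positivity
  have f4 : (a + 2 : ℝ) ≠ 0 := by positivity
  have f5 : (i + 2 : ℝ) ≠ 0 := by positivity
  rw [show (2 * a + 2 * i + 6 + 1 : ℝ) = 2 * a + 2 * i + 7 by ring,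
    show (2 * a + 2 * i + 7 + 1 : ℝ) = 2 * a + 2 * i + 8 by ring,
    show (a + 1 + 1 : ℝ) = a + 2 by ring, show (i + 1 + 1 : ℝ) = i + 2 by ring,
    show (2 : ℝ) ^ (i + 3) = 2 ^ (i + 2) * 2 by ring]
  have e0 : (2 : ℝ) ^ (i + 2) ≠ 0 := by positivity
  generalize (2 : ℝ) ^ (i + 2) = x0 at *
  rw [div_mul_div_comm, div_eq_div_iff (by positivity) (by positivity)]
  ring

lemma ratio_bound (a i : ℝ) (ha : 0 ≤ a) (hi : 0 ≤ i) :
    6 * ((i + 2) / (a + i + 4)) ^ 2 ≤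
    (((2 * a + 3 * i + 7 : ℝ) * (2 * a + 5) * (2 * a + 4) * (2 * a + 3) * (2 * a + 2) * (i + 2)) /
     (2 * (2 * a + 2 * i + 7) * (2 * a + 2 * i + 8) * ((a + 2) * (a + 1)) ^ 2)) := by
  have h : (((2 * a + 3 * i + 7 : ℝ) * (2 * a + 5) * (2 * a + 4) * (2 * a + 3) * (2 * a + 2) *
      (i + 2)) / (2 * (2 * a + 2 * i + 7) * (2 * a + 2 * i + 8) * ((a + 2) * (a + 1)) ^ 2)) =
      ((2 * a + 5) * (2 * a + 3) / ((a + 2) * (a + 1))) *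
      ((2 * a + 3 * i + 7) * (i + 2) / ((2 * a + 2 * i + 7) * (a + i + 4))) := by
    rw [div_mul_div_comm, div_eq_div_iff (by positivity) (by positivity)]
    ring
  rw [h]
  have h1 : 4 ≤ (2 * a + 5) * (2 * a + 3) / ((a + 2) * (a + 1)) := by
    rw [le_div_iff₀ (by positivity)]
    nlinarith
  have h2 : 3 / 2 * ((i + 2) / (a + i + 4)) ^ 2 ≤
      (2 * a + 3 * i + 7) * (i + 2) / ((2 * a + 2 * i + 7) * (a + i + 4)) := by
    calc 3 / 2 * ((i + 2) / (a + i + 4)) ^ 2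
        = (3 * (i + 2)) * (i + 2) / ((2 * a + 2 * i + 8) * (a + i + 4)) := by
          rw [div_pow, div_mul_div_comm, div_eq_div_iff (by positivity) (by positivity)]
          ring
      _ ≤ _ := by
          gcongr <;> linarith
  have h3 : 0 ≤ ((i + 2) / (a + i + 4)) ^ 2 := by positivity
  nlinarith

lemma w_step (μ₁ x r : ℝ) (hx0 : 0 < x) (hx1 : x < 1)
    (hr : r = 6 * Real.exp (-μ₁) * ((1 - x) / (1 + x)) ^ 2) (N m : ℕ) (hN : Even N)
    (hm : Even m) (h2 : 2 ≤ m) (hmN : m + 2 ≤ N) (hmx : (m : ℝ) ≤ x * N) :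
    r * w μ₁ N m ≤ w μ₁ N (m + 2) := by
  obtain ⟨a, rfl⟩ : ∃ a, m = a + 2 := ⟨m - 2, by omega⟩
  obtain ⟨i, rfl⟩ : ∃ i, N = a + 2 * i + 4 := by
    obtain ⟨s, hs⟩ := hN
    obtain ⟨t, ht⟩ := hm
    exact ⟨s - t - 1, by omega⟩
  unfold w
  rw [show a + 2 + 2 = a + 4 from rfl, C0_ratio]
  have hb := ratio_bound a i (by positivity) (by positivity)
  have hq : (1 - x) / (1 + x) ≤ ((i : ℝ) + 2) / (a + i + 4) := by
    rw [div_le_div_iff₀ (by positivity) (by positivity)]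
    push_cast at hmx
    nlinarith
  have hq2 : ((1 - x) / (1 + x)) ^ 2 ≤ (((i : ℝ) + 2) / (a + i + 4)) ^ 2 := by
    have : 0 ≤ (1 - x) / (1 + x) := div_nonneg (by linarith) (by linarith)
    gcongr
  have hc := C0_pos (a + 2 * i + 4) (a + 2)
  have he : Real.exp (-μ₁ * ((a + 4 : ℕ) : ℝ) / 2)
      = Real.exp (-μ₁) * Real.exp (-μ₁ * ((a + 2 : ℕ) : ℝ) / 2) := by
    rw [← Real.exp_add]
    congr 1
    push_cast
    ring
  rw [he, hr]
  calc 6 * Real.exp (-μ₁) * ((1 - x) / (1 + x)) ^ 2 *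
        (Real.exp (-μ₁ * ((a + 2 : ℕ) : ℝ) / 2) * C0 (a + 2 * i + 4) (a + 2))
      = Real.exp (-μ₁) * Real.exp (-μ₁ * ((a + 2 : ℕ) : ℝ) / 2) *
        ((6 * ((1 - x) / (1 + x)) ^ 2) * C0 (a + 2 * i + 4) (a + 2)) := by ring
    _ ≤ _ := by
      have := (mul_le_mul_of_nonneg_left hq2 (by norm_num : (0:ℝ) ≤ 6)).trans hb
      gcongr

lemma w_iter (μ₁ x r : ℝ) (hx0 : 0 < x) (hx1 : x < 1) (hr1 : 1 < r)
    (hr : r = 6 * Real.exp (-μ₁) * ((1 - x) / (1 + x)) ^ 2) (N m : ℕ) (hN : Even N)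
    (hm : Even m) (h2 : 2 ≤ m) (k : ℕ) (hk : ((m + 2 * k : ℕ) : ℝ) ≤ x * N) :
    r ^ k * w μ₁ N m ≤ w μ₁ N (m + 2 * k) := by
  induction k with
  | zero => simp
  | succ k ih =>
    push_cast at hk ih
    have ih := ih (by linarith)
    have hle : m + 2 * k + 2 ≤ N := by
      have : ((m + 2 * k + 2 : ℕ) : ℝ) ≤ N := by
        push_cast
        have : x * N ≤ 1 * N := by gcongr
        linarith
      exact_mod_cast this
    have hs := w_step μ₁ x r hx0 hx1 hr N (m + 2 * k) hN
      (hm.add (even_two_mul k)) (by omega) hle (by push_cast; linarith)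
    calc r ^ (k + 1) * w μ₁ N m = r * (r ^ k * w μ₁ N m) := by ring
      _ ≤ r * w μ₁ N (m + 2 * k) := by gcongr
      _ ≤ _ := hs

lemma exists_x (μ₁ : ℝ) (hμ : μ₁ < Real.log 6) : ∃ x : ℝ, 0 < x ∧ x < 1 ∧
    1 < 6 * Real.exp (-μ₁) * ((1 - x) / (1 + x)) ^ 2 := by
  have h0 : 1 < 6 * Real.exp (-μ₁) * ((1 - (0:ℝ)) / (1 + 0)) ^ 2 := by
    have : Real.exp μ₁ < 6 := by
      rwa [← Real.lt_log_iff_exp_lt (by norm_num)]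
    have hp := Real.exp_pos μ₁
    rw [Real.exp_neg]
    norm_num
    rw [← div_eq_mul_inv, lt_div_iff₀ hp]
    linarith
  have hc : ContinuousAt (fun x : ℝ => 6 * Real.exp (-μ₁) * ((1 - x) / (1 + x)) ^ 2) 0 := by
    apply ContinuousAt.mul continuousAt_const
    apply ContinuousAt.pow
    apply ContinuousAt.div (by fun_prop) (by fun_prop) (by norm_num)
  have h1 := (hc.eventually (lt_mem_nhds h0)).filter_mono (nhdsWithin_le_nhds (s := Set.Ioi 0))
  have h2 : ∀ᶠ x : ℝ in nhdsWithin 0 (Set.Ioi 0), x ∈ Set.Ioo (0:ℝ) 1 :=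
    Ioo_mem_nhdsGT one_pos
  obtain ⟨x, hx, hx'⟩ := (h1.and h2).exists
  exact ⟨x, hx'.1, hx'.2, hx⟩

open scoped Classical

/-- Supercritical (elongated) phase: for some ε > 0, the probability that the boundary
length is at least εN tends to 1 along even N → ∞. -/
theorem supercritical_phase (μ₁ : ℝ) (hμ : μ₁ < Real.log 6) :
    ∃ ε : ℝ, 0 < ε ∧
      Filter.Tendsto
        (fun N : ℕ =>
          ∑ m ∈ (Finset.range (N + 1)).filter
              (fun m : ℕ => Even m ∧ 2 ≤ m ∧ ε * (N : ℝ) ≤ (m : ℝ)), P μ₁ N m)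
        evenAtTop (nhds 1) := by
  obtain ⟨x, hx0, hx1, hr1⟩ := exists_x μ₁ hμ
  set r := 6 * Real.exp (-μ₁) * ((1 - x) / (1 + x)) ^ 2 with hr
  refine ⟨x / 2, by positivity, ?_⟩
  have hlim : Tendsto (fun N : ℕ => 1 - (r⁻¹) ^ ⌊x / 4 * (N : ℝ)⌋₊) evenAtTop (nhds 1) := by
    have h1 : Tendsto (fun N : ℕ => ⌊x / 4 * (N : ℝ)⌋₊) atTop atTop :=
      tendsto_nat_floor_atTop.comp
        (tendsto_natCast_atTop_atTop.const_mul_atTop (by positivity))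
    have h2 := (tendsto_pow_atTop_nhds_zero_of_lt_one (r := r⁻¹) (by positivity)
      (inv_lt_one_of_one_lt₀ hr1)).comp h1
    have h3 := (h2.const_sub 1).mono_left (inf_le_left : evenAtTop ≤ atTop)
    simpa [evenAtTop] using h3
  have hev : ∀ᶠ N : ℕ in evenAtTop, 2 ≤ N ∧ Even N :=
    ((eventually_ge_atTop 2).filter_mono inf_le_left).and
      ((mem_inf_of_right (mem_principal_self _) : {N : ℕ | Even N} ∈ evenAtTop))
  have key : ∀ N : ℕ, 2 ≤ N ∧ Even N →
      0 < Θ μ₁ N ∧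
      (∑ m ∈ (Finset.range (N + 1)).filter
        (fun m : ℕ => Even m ∧ 2 ≤ m ∧ x / 2 * (N : ℝ) ≤ (m : ℝ)), w μ₁ N m) +
      (∑ m ∈ (Finset.range (N + 1)).filter
        (fun m : ℕ => Even m ∧ 2 ≤ m ∧ ¬ (x / 2 * (N : ℝ) ≤ (m : ℝ))), w μ₁ N m) = Θ μ₁ N ∧
      (∑ m ∈ (Finset.range (N + 1)).filter
        (fun m : ℕ => Even m ∧ 2 ≤ m ∧ ¬ (x / 2 * (N : ℝ) ≤ (m : ℝ))), w μ₁ N m) ≤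
        (r⁻¹) ^ ⌊x / 4 * (N : ℝ)⌋₊ * Θ μ₁ N := by
    rintro N ⟨hN2, hN⟩
    refine ⟨?_, ?_, ?_⟩
    · unfold Θ
      apply Finset.sum_pos (fun m _ => w_pos μ₁ N m)
      exact ⟨2, by simp; omega⟩
    · unfold Θ
      rw [← Finset.sum_filter_add_sum_filter_not
        ((Finset.range (N + 1)).filter (fun m => Even m ∧ 2 ≤ m))
        (fun m : ℕ => x / 2 * (N : ℝ) ≤ (m : ℝ)), Finset.filter_filter, Finset.filter_filter]
      simp only [and_assoc]
    · set k := ⌊x / 4 * (N : ℝ)⌋₊ with hk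
      have hkle : (k : ℝ) ≤ x / 4 * N := Nat.floor_le (by positivity)
      have hfit : ∀ m : ℕ, ¬ (x / 2 * (N : ℝ) ≤ (m : ℝ)) → ((m + 2 * k : ℕ) : ℝ) ≤ x * N := by
        intro m hm
        push_cast
        push Not at hm
        linarith
      calc _ ≤ ∑ m ∈ (Finset.range (N + 1)).filter
            (fun m : ℕ => Even m ∧ 2 ≤ m ∧ ¬ (x / 2 * (N : ℝ) ≤ (m : ℝ))),
            (r⁻¹) ^ k * w μ₁ N (m + 2 * k) := by
            apply Finset.sum_le_sum
            intro m hm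
            simp only [Finset.mem_filter] at hm
            have := w_iter μ₁ x r hx0 hx1 hr1 hr N m hN hm.2.1 hm.2.2.1 k (hfit m hm.2.2.2)
            rw [inv_pow, ← div_eq_inv_mul, le_div_iff₀ (by positivity)]
            linarith
        _ = (r⁻¹) ^ k * ∑ m ∈ (Finset.range (N + 1)).filter
            (fun m : ℕ => Even m ∧ 2 ≤ m ∧ ¬ (x / 2 * (N : ℝ) ≤ (m : ℝ))),
            w μ₁ N (m + 2 * k) := by rw [Finset.mul_sum]
        _ ≤ _ := by
            apply mul_le_mul_of_nonneg_left _ (by positivity)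
            unfold Θ
            rw [← Finset.sum_image (f := fun m => w μ₁ N m) (g := fun m => m + 2 * k)
              (by intro a _ b _ h; simpa using h)]
            apply Finset.sum_le_sum_of_subset_of_nonneg
            · intro n hn
              simp only [Finset.mem_image, Finset.mem_filter, Finset.mem_range] at hn ⊢
              obtain ⟨m, ⟨_, hme, hm2, hmx⟩, rfl⟩ := hn
              refine ⟨?_, hme.add (even_two_mul k), by omega⟩
              have h1 := hfit m hmx
              have h2 : x * N ≤ 1 * N := by gcongr
              have : ((m + 2 * k : ℕ) : ℝ) ≤ N := by linarith
              have : m + 2 * k ≤ N := by exact_mod_cast this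
              omega
            · intro m _ _
              exact (w_pos μ₁ N m).le
  refine tendsto_of_tendsto_of_tendsto_of_le_of_le' hlim tendsto_const_nhds ?_ ?_
  · filter_upwards [hev] with N hN
    obtain ⟨h1, h2, h3⟩ := key N hN
    unfold P
    rw [← Finset.sum_div, le_div_iff₀ h1]
    linarith
  · filter_upwards [hev] with N hN
    obtain ⟨h1, h2, h3⟩ := key N hN
    unfold P
    rw [← Finset.sum_div, div_le_one h1, ← h2]
    have : 0 ≤ ∑ m ∈ (Finset.range (N + 1)).filter
        (fun m : ℕ => Even m ∧ 2 ≤ m ∧ ¬ (x / 2 * (N : ℝ) ≤ (m : ℝ))), w μ₁ N m :=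
      Finset.sum_nonneg (fun m _ => (w_pos μ₁ N m).le)
    linarith
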